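/- In a two-block warehouse graph under no-reversal routing, assume subaisle 1 ∈ K1. Then the total vertical distance of the S-shape route r_S^1 satisfies: l_{r_S^1} − |K1 ∪ K2| · d = 2d if |K1| and |K2| are both odd; l_{r_S^1} − |K1 ∪ K2| · d = 0 if |K1| and |K2| are both even; and l_{r_S^1} − |K1 ∪ K2| · d = d if exactly one of |K1| and |K2| is odd. -/

import Mathlib

namespace TwoBlock

/-- Vertices of a two-block warehouse with `n` vertical aisles and three
horizontal cross-aisles (`0` = top, `1` = middle, `2` = bottom).  Each aisle
`i` is split by the middle cross-aisle into a top subaisle `(i,0)` and a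
bottom subaisle `(i,1)`; subaisle `(i,j)` contains `m i j + 1` picking
vertices.  `Sum.inl (i, j)` is the artificial vertex at aisle `i` on
cross-aisle `j`; `Sum.inr ⟨i, j, k⟩` is the `k`-th picking vertex (from north
to south) of subaisle `(i,j)`. -/
abbrev TBV (n : ℕ) (m : Fin n → Fin 2 → ℕ) : Type :=
  (Fin n × Fin 3) ⊕ ((i : Fin n) × (j : Fin 2) × Fin (m i j + 1))

variable {n : ℕ} {m : Fin n → Fin 2 → ℕ}

/-- the artificial vertex at aisle `i` on cross-aisle `j` -/
def art (i : Fin n) (j : Fin 3) : TBV n m := Sum.inl (i, j)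

/-- the `k`-th picking vertex of subaisle `(i,j)` -/
def pk (i : Fin n) (j : Fin 2) (k : Fin (m i j + 1)) : TBV n m := Sum.inr ⟨i, j, k⟩

/-- `v` is a picking vertex -/
def IsPick (v : TBV n m) : Prop := ∃ i j k, v = pk i j k

/-- the full path through subaisle `(i,j)` from its northern endpoint to its
southern endpoint -/
def subPath (i : Fin n) (j : Fin 2) : List (TBV n m) :=
  art i j.castSucc :: ((List.ofFn fun k : Fin (m i j + 1) => pk i j k) ++ [art i j.succ])

/-- `x` and `y` occur consecutively (in this order) in the list `l` -/
def adjIn {α : Type*} (l : List α) (x y : α) : Prop :=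
  ∃ p : ℕ, l[p]? = some x ∧ l[p + 1]? = some y

/-- adjacency in the two-block warehouse graph: neighboring artificial
vertices along each of the three cross-aisles, and consecutive vertices along
each subaisle path -/
def Adj (x y : TBV n m) : Prop :=
  (∃ (i i' : Fin n) (j : Fin 3), (i' : ℕ) = (i : ℕ) + 1 ∧
    ((x = art i j ∧ y = art i' j) ∨ (x = art i' j ∧ y = art i j))) ∨
  (∃ i j, adjIn (subPath i j) x y ∨ adjIn (subPath i j) y x)

/-- the length of a walk, written as a list of vertices: the sum of the
lengths of its edges, counted with multiplicity -/
noncomputable def pathLen {α : Type*} (len : α → α → ℝ) (r : List α) : ℝ :=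
  ((r.zip r.tail).map fun p => len p.1 p.2).sum

/-- a tour: a closed walk starting and ending at `s` -/
def IsTourFrom (s : TBV n m) (r : List (TBV n m)) : Prop :=
  r.head? = some s ∧ r.getLast? = some s ∧ r.Chain' Adj

/-- the full path through subaisle `(i,j)` in the direction `dir`
(`true` = from north to south, `false` = from south to north) -/
def dirPath (i : Fin n) (j : Fin 2) (dir : Bool) : List (TBV n m) :=
  if dir then subPath i j else (subPath i j).reverse

/-- the tour `r` performs a full traversal of subaisle `(i,j)` in direction
`dir` starting at position `q` -/
def TravAt (r : List (TBV n m)) (q : ℕ) (i : Fin n) (j : Fin 2) (dir : Bool) : Prop :=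
  dirPath i j dir <+: r.drop q

/-- `r` is a no-reversal tour: whenever it enters a subaisle it traverses it
completely from one endpoint to the other, i.e. every occurrence of a picking
vertex lies inside a contiguous full traversal of its subaisle -/
def NoReversal (r : List (TBV n m)) : Prop :=
  ∀ (p : ℕ) (i : Fin n) (j : Fin 2) (k : Fin (m i j + 1)),
    r[p]? = some (pk i j k) →
      ∃ q dir, TravAt r q i j dir ∧ q ≤ p ∧ p < q + (subPath (m := m) i j).length

/-- the tour `r` traverses subaisle `(i,j)` (at least once) -/
def Traverses (r : List (TBV n m)) (i : Fin n) (j : Fin 2) : Prop :=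
  ∃ q dir, TravAt r q i j dir

/-- `K1` (resp. `K2`) is the set of aisles whose top (resp. bottom) subaisle
contains a required picking vertex; `r` traverses every required subaisle at
least once -/
def TraversesAll (K1 K2 : Finset (Fin n)) (r : List (TBV n m)) : Prop :=
  (∀ a ∈ K1, Traverses r a 0) ∧ (∀ a ∈ K2, Traverses r a 1)

/-- `v` is a picking vertex (Boolean version) -/
def isPickV : TBV n m → Bool := fun v =>
  match v with
  | Sum.inr _ => true
  | Sum.inl _ => false

/-- the total vertical distance of a tour: the sum of the lengths of all
subaisle (vertical) edges it traverses, counted with multiplicity -/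
noncomputable def vertLen (len : TBV n m → TBV n m → ℝ) (r : List (TBV n m)) : ℝ :=
  ((r.zip r.tail).map fun p =>
    if isPickV p.1 || isPickV p.2 then len p.1 p.2 else 0).sum

/-- number of contiguous occurrences of `seg` in `r` -/
def occCount {α : Type*} [DecidableEq α] (seg r : List α) : ℕ :=
  ((List.range r.length).filter fun p => seg.isPrefixOf (r.drop p)).length

/-- the position of the first full traversal of subaisle `(i,j)` by the tour
`r` -/
noncomputable def firstPos (r : List (TBV n m)) (i : Fin n) (j : Fin 2) : ℕ :=
  sInf {q | ∃ dir, TravAt r q i j dir}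

/-- every full subaisle traversal performed by `r` is a traversal of a
required subaisle -/
def OnlyRequired (K1 K2 : Finset (Fin n)) (r : List (TBV n m)) : Prop :=
  ∀ q i j dir, TravAt r q i j dir → (j = 0 ∧ i ∈ K1) ∨ (j = 1 ∧ i ∈ K2)

/-- `r` is an S-shape route of type `r_S^1`: it only traverses required
subaisles; it first visits the subaisles of `K1 \ {i₀}` (where `i₀` is the
leftmost subaisle of `K1`) from left to right with alternating directions,
then the subaisles of `K2` from left to right with alternating directions,
and its final subaisle traversal is a traversal of `i₀`. -/
def SShape1 (K1 K2 : Finset (Fin n)) (hK1 : K1.Nonempty) (r : List (TBV n m)) : Prop :=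
  OnlyRequired K1 K2 r ∧
  ((K1.erase (K1.min' hK1)).sort (· ≤ ·)).Chain'
    (fun a a' => firstPos r a 0 < firstPos r a' 0) ∧
  (∀ a ∈ K1.erase (K1.min' hK1), ∀ b ∈ K2, firstPos r a 0 < firstPos r b 1) ∧
  ((K2.sort (· ≤ ·)).Chain' fun b b' => firstPos r b 1 < firstPos r b' 1) ∧
  (∃ fd : Fin n → Fin 2 → Bool,
    (∀ a ∈ K1, TravAt r (firstPos r a 0) a 0 (fd a 0)) ∧
    (∀ b ∈ K2, TravAt r (firstPos r b 1) b 1 (fd b 1)) ∧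
    ((K1.erase (K1.min' hK1)).sort (· ≤ ·)).Chain' (fun a a' => fd a 0 ≠ fd a' 0) ∧
    ((K2.sort (· ≤ ·)).Chain' fun b b' => fd b 1 ≠ fd b' 1)) ∧
  (∃ q dir, TravAt r q (K1.min' hK1) 0 dir ∧
    ∀ (q' : ℕ) (i' : Fin n) (j' : Fin 2) (dir' : Bool),
      TravAt r q' i' j' dir' → q' ≤ q)

/-- `r` is an S-shape route of type `r_S^2`: it only traverses required
subaisles, and it visits the subaisles of `K1` from left to right with
alternating directions and then the subaisles of `K2` from left to right with
alternating directions. -/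
def SShape2 (K1 K2 : Finset (Fin n)) (r : List (TBV n m)) : Prop :=
  OnlyRequired K1 K2 r ∧
  ((K1.sort (· ≤ ·)).Chain' fun a a' => firstPos r a 0 < firstPos r a' 0) ∧
  (∀ a ∈ K1, ∀ b ∈ K2, firstPos r a 0 < firstPos r b 1) ∧
  ((K2.sort (· ≤ ·)).Chain' fun b b' => firstPos r b 1 < firstPos r b' 1) ∧
  (∃ fd : Fin n → Fin 2 → Bool,
    (∀ a ∈ K1, TravAt r (firstPos r a 0) a 0 (fd a 0)) ∧
    (∀ b ∈ K2, TravAt r (firstPos r b 1) b 1 (fd b 1)) ∧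
    ((K1.sort (· ≤ ·)).Chain' fun a a' => fd a 0 ≠ fd a' 0) ∧
    ((K2.sort (· ≤ ·)).Chain' fun b b' => fd b 1 ≠ fd b' 1))


inductive Stp (n : ℕ) : Type
  | h (i i' : Fin n) (j : Fin 3) : Stp n
  | v (i : Fin n) (j : Fin 2) (dir : Bool) : Stp n

def lev (j : Fin 2) (b : Bool) : Fin 3 := if b then j.castSucc else j.succ

def Stp.src : Stp n → Fin n × Fin 3
  | .h i _ j => (i, j)
  | .v i j dir => (i, lev j dir)

def Stp.tgt : Stp n → Fin n × Fin 3
  | .h _ i' j => (i', j)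
  | .v i j dir => (i, lev j (!dir))

def Stp.mid (m : Fin n → Fin 2 → ℕ) : Stp n → List (TBV n m)
  | .h _ _ _ => []
  | .v i j dir => if dir then List.ofFn (fun k : Fin (m i j + 1) => pk i j k)
      else (List.ofFn (fun k : Fin (m i j + 1) => pk i j k)).reverse

def Stp.ok : Stp n → Prop
  | .h i i' _ => i'.val = i.val + 1 ∨ i.val = i'.val + 1
  | .v _ _ _ => True

def ex (m : Fin n → Fin 2 → ℕ) : List (Stp n) → List (TBV n m)
  | [] => []
  | st :: ss => st.mid m ++ Sum.inl st.tgt :: ex m ss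

def Valid : Fin n × Fin 3 → List (Stp n) → Fin n × Fin 3 → Prop
  | s, [], t => s = t
  | s, st :: ss, t => st.src = s ∧ st.ok ∧ Valid st.tgt ss t

def vs : List (Stp n) → List (Fin n × Fin 2 × Bool)
  | [] => []
  | .h _ _ _ :: ss => vs ss
  | .v i j dir :: ss => (i, j, dir) :: vs ss

theorem vs_append (A B : List (Stp n)) : vs (A ++ B) = vs A ++ vs B := by
  induction A with
  | nil => rfl
  | cons a A ih => cases a <;> simp [vs, ih]

theorem ex_append (A B : List (Stp n)) : ex m (A ++ B) = ex m A ++ ex m B := by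
  induction A with
  | nil => rfl
  | cons a A ih => simp [ex, ih]

theorem valid_append {A B : List (Stp n)} {s t u : Fin n × Fin 3} (h1 : Valid s A t)
    (h2 : Valid t B u) : Valid s (A ++ B) u := by
  induction A generalizing s with
  | nil => cases h1; exact h2
  | cons a A ih => exact ⟨h1.1, h1.2.1, ih h1.2.2⟩

theorem dirPath_eq (i : Fin n) (j : Fin 2) (dir : Bool) :
    (dirPath i j dir : List (TBV n m)) =
      Sum.inl (Stp.v i j dir).src :: ((Stp.v i j dir).mid m ++ [Sum.inl (Stp.v i j dir).tgt]) := by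
  cases dir <;> simp [dirPath, subPath, Stp.src, Stp.tgt, Stp.mid, lev, art]

theorem mem_mid_v {i : Fin n} {j : Fin 2} {dir : Bool} {x : TBV n m}
    (h : x ∈ (Stp.v i j dir).mid m) : ∃ k, x = pk i j k := by
  have h' : x ∈ List.ofFn (fun k : Fin (m i j + 1) => (pk i j k : TBV n m)) := by
    cases dir
    · exact List.mem_reverse.1 h
    · exact h
  rw [List.mem_ofFn] at h'
  obtain ⟨k, hk⟩ := h'
  exact ⟨k, hk.symm⟩

theorem mid_len (i : Fin n) (j : Fin 2) (dir : Bool) :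
    ((Stp.v i j dir).mid m).length = m i j + 1 := by
  cases dir <;> simp [Stp.mid]

theorem subPath_len (i : Fin n) (j : Fin 2) :
    (subPath i j : List (TBV n m)).length = m i j + 3 := by
  simp [subPath]

theorem mem_mid {st : Stp n} {x : TBV n m}
    (h : x ∈ st.mid m) : ∃ i j k, x = pk i j k := by
  cases st with
  | h => simp [Stp.mid] at h
  | v i j dir => exact ⟨i, j, mem_mid_v h⟩

theorem mid_cons (i : Fin n) (j : Fin 2) (dir : Bool) :
    ∃ k l, (Stp.v i j dir).mid m = pk i j k :: l := by
  have h := mid_len (m := m) i j dir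
  cases hm : (Stp.v i j dir).mid m with
  | nil => simp [hm] at h
  | cons x l =>
    obtain ⟨k, hk⟩ := mem_mid_v (i := i) (j := j) (dir := dir) (x := x) (by simp [hm])
    exact ⟨k, l, by rw [hk]⟩

theorem lev_inj (j : Fin 2) {b b' : Bool} (h : lev j b = lev j b') : b = b' := by
  revert j b b'; decide

theorem trav_split {s t : Fin n × Fin 3} {ss : List (Stp n)} (hv : Valid s ss t) {q : ℕ}
    {i : Fin n} {j : Fin 2} {dir : Bool}
    (h : TravAt (Sum.inl s :: ex m ss) q i j dir) :
    ∃ A B, ss = A ++ Stp.v i j dir :: B ∧ q = (ex m A).length := by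
  induction ss generalizing s q with
  | nil =>
    have := h.length_le
    rw [dirPath_eq] at this
    simp [ex, mid_len] at this
    omega
  | cons st ss ih =>
    obtain ⟨h1, h2, h3⟩ := hv
    unfold TravAt at h
    rw [dirPath_eq] at h
    obtain ⟨k, l, hk⟩ := mid_cons (m := m) i j dir
    rcases Nat.eq_zero_or_pos q with rfl | hq
    · refine ⟨[], ss, ?_, by simp [ex]⟩
      rw [hk] at h
      cases st with
      | h a a' b =>
        simp [ex, Stp.mid, pk] at h
      | v a b dir' =>
        obtain ⟨k', l', hk'⟩ := mid_cons (m := m) a b dir'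
        simp only [ex, hk', List.drop_zero, List.cons_append, List.cons_prefix_cons] at h
        obtain ⟨e1, e2, -⟩ := h
        simp only [pk, Sum.inr.injEq, Sigma.mk.injEq] at e2
        obtain ⟨rfl, e2⟩ := e2
        simp at e2
        obtain ⟨rfl, e2⟩ := e2
        rw [← h1] at e1
        simp [Stp.src] at e1
        rw [lev_inj _ e1]; rfl
    · obtain ⟨q, rfl⟩ : ∃ q', q = q' + 1 := ⟨q - 1, by omega⟩
      simp only [ex, List.drop_succ_cons, List.drop_append] at h
      by_cases hlt : q < (st.mid m).length
      · rw [List.drop_eq_getElem_cons hlt] at h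
        simp only [List.cons_append, List.cons_prefix_cons] at h
        obtain ⟨a, b, c, e⟩ := mem_mid (m := m) (List.getElem_mem hlt)
        rw [e] at h
        simp [pk] at h
      · rw [List.drop_eq_nil_of_le (by omega), List.nil_append] at h
        obtain ⟨A, B, e1, e2⟩ := ih h3 (q := q - (st.mid m).length) (by
          unfold TravAt; rw [dirPath_eq]; exact h)
        refine ⟨st :: A, B, by simp [e1], ?_⟩
        simp [ex]; omega

theorem trav_of_split {s t : Fin n × Fin 3} {ss : List (Stp n)} (hv : Valid s ss t)
    {i : Fin n} {j : Fin 2} {dir : Bool} {A B : List (Stp n)}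
    (h : ss = A ++ Stp.v i j dir :: B) :
    TravAt (Sum.inl s :: ex m ss) (ex m A).length i j dir := by
  subst h
  induction A generalizing s with
  | nil =>
    refine ⟨ex m B, ?_⟩
    rw [dirPath_eq, ← hv.1]
    simp [ex]
  | cons st A ih =>
    have := ih hv.2.2
    unfold TravAt at this ⊢
    simp only [ex, List.cons_append, List.length_append, List.length_cons]
    rw [← Nat.add_assoc, List.drop_succ_cons, List.drop_append]
    rw [List.drop_eq_nil_of_le (by omega), List.nil_append]
    simpa using this

theorem pick_split {s t : Fin n × Fin 3} {ss : List (Stp n)} (hv : Valid s ss t) {p : ℕ}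
    {i : Fin n} {j : Fin 2} {k : Fin (m i j + 1)}
    (h : (Sum.inl s :: ex m ss : List (TBV n m))[p]? = some (pk i j k)) :
    ∃ A dir B, ss = A ++ Stp.v i j dir :: B ∧ (ex m A).length ≤ p ∧
      p < (ex m A).length + (m i j + 3) := by
  induction ss generalizing s p with
  | nil =>
    cases p <;> simp [ex, pk] at h
  | cons st ss ih =>
    cases p with
    | zero => simp [pk] at h
    | succ p =>
      simp only [ex, List.getElem?_cons_succ] at h
      by_cases hlt : p < (st.mid m).length
      · rw [List.getElem?_append_left hlt] at h
        have hm := List.mem_of_getElem? h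
        cases st with
        | h => simp [Stp.mid] at hm
        | v a b dir =>
          obtain ⟨k', e⟩ := mem_mid_v hm
          simp only [pk, Sum.inr.injEq, Sigma.mk.injEq] at e
          obtain ⟨rfl, e⟩ := e
          simp at e
          obtain ⟨rfl, e⟩ := e
          rw [mid_len] at hlt
          exact ⟨[], dir, ss, rfl, by simp [ex], by simp [ex]; omega⟩
      · rw [List.getElem?_append_right (by omega)] at h
        obtain ⟨A, dir, B, e1, e2, e3⟩ := ih hv.2.2 h
        refine ⟨st :: A, dir, B, by simp [e1], ?_, ?_⟩ <;> simp [ex] <;> omega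

theorem noRev {s t : Fin n × Fin 3} {ss : List (Stp n)} (hv : Valid s ss t) :
    NoReversal (Sum.inl s :: ex m ss : List (TBV n m)) := by
  intro p i j k h
  obtain ⟨A, dir, B, e1, e2, e3⟩ := pick_split hv h
  exact ⟨_, dir, trav_of_split hv e1, e2, by rw [subPath_len]; omega⟩

theorem getLast_ex {s t : Fin n × Fin 3} {ss : List (Stp n)} (hv : Valid s ss t) :
    (Sum.inl s :: ex m ss : List (TBV n m)).getLast? = some (Sum.inl t) := by
  induction ss generalizing s with
  | nil => cases hv; rfl
  | cons st ss ih =>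
    have := ih hv.2.2
    rw [ex, ← List.cons_append, List.getLast?_append, this]; rfl

theorem adjIn_chain {α : Type*} (l : List α) : l.IsChain (adjIn l) := by
  rw [List.isChain_iff_getElem]
  intro i hi
  exact ⟨i, by simp, by simp⟩

theorem Adj.symm {x y : TBV n m} (h : Adj x y) : Adj y x := by
  rcases h with ⟨i, i', j, h, h'⟩ | ⟨i, j, h⟩
  · exact Or.inl ⟨i, i', j, h, by tauto⟩
  · exact Or.inr ⟨i, j, by tauto⟩

theorem dirPath_chain (i : Fin n) (j : Fin 2) (dir : Bool) :
    (dirPath i j dir : List (TBV n m)).IsChain Adj := by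
  have h : (subPath i j : List (TBV n m)).IsChain Adj :=
    (adjIn_chain _).imp fun a b hab => Or.inr ⟨i, j, Or.inl hab⟩
  cases dir
  · simp only [dirPath]
    rw [if_neg (by simp), List.isChain_reverse]
    exact h.imp fun a b hab => Adj.symm hab
  · simpa [dirPath] using h

theorem step_chain (st : Stp n) (h : st.ok) :
    (Sum.inl st.src :: (st.mid m ++ [Sum.inl st.tgt]) : List (TBV n m)).IsChain Adj := by
  cases st with
  | h a a' b =>
    simp [Stp.mid]
    rcases h with h | h
    · exact Or.inl ⟨a, a', b, h, Or.inl ⟨rfl, rfl⟩⟩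
    · exact Or.inl ⟨a', a, b, h, Or.inr ⟨rfl, rfl⟩⟩
  | v i j dir => rw [← dirPath_eq]; exact dirPath_chain i j dir

theorem ex_chain {s t : Fin n × Fin 3} {ss : List (Stp n)} (hv : Valid s ss t) :
    (Sum.inl s :: ex m ss : List (TBV n m)).IsChain Adj := by
  induction ss generalizing s with
  | nil => simp [ex]
  | cons st ss ih =>
    have h1 := ih hv.2.2
    have h2 := step_chain (m := m) st hv.2.1
    rw [hv.1] at h2
    rw [ex]
    rw [← List.cons_append] at h2 ⊢
    rw [List.isChain_append] at h2 ⊢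
    refine ⟨h2.1, h1, ?_⟩
    simpa using h2.2.2

theorem noRev_drop {r : List (TBV n m)} (h : NoReversal r) (L : ℕ) {u : Fin n × Fin 3}
    (hL : r[L]? = some (Sum.inl u)) : NoReversal (r.drop L) := by
  intro p i j k hp
  rw [List.getElem?_drop] at hp
  obtain ⟨q, dir, h1, h2, h3⟩ := h _ _ _ _ hp
  have hp0 : p ≠ 0 := by
    rintro rfl
    rw [Nat.add_zero, hL] at hp
    simp [pk] at hp
  have hq : L ≤ q := by
    by_contra hlt
    push Not at hlt
    rw [subPath_len] at h3
    obtain ⟨w, hw⟩ := h1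
    have : (r.drop q)[L - q]? = some (Sum.inl u) := by
      rw [List.getElem?_drop, ← hL]; congr 1; omega
    rw [← hw, dirPath_eq] at this
    obtain ⟨z, hz⟩ : ∃ z, L - q = z + 1 := ⟨L - q - 1, by omega⟩
    have hzl : z < ((Stp.v i j dir).mid m).length := by rw [mid_len]; omega
    rw [hz, List.cons_append, List.getElem?_cons_succ, List.append_assoc,
      List.getElem?_append_left hzl] at this
    obtain ⟨k, hk⟩ := mem_mid_v (List.mem_of_getElem? this)
    simp [pk] at hk
  refine ⟨q - L, dir, ?_, by omega, by omega⟩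
  unfold TravAt at h1 ⊢
  rw [List.drop_drop]
  rwa [Nat.add_sub_cancel' hq]

theorem subPath_col {i : Fin n} {j : Fin 2} {x y : TBV n m} (h : adjIn (subPath i j) x y) :
    (isPickV x || isPickV y) = true := by
  obtain ⟨p, h1, h2⟩ := h
  rw [subPath] at h1 h2
  rw [List.getElem?_cons_succ] at h2
  by_cases hp : p < m i j + 1
  · rw [List.getElem?_append_left (by simpa using hp)] at h2
    have := List.mem_of_getElem? h2
    rw [List.mem_ofFn] at this
    obtain ⟨k, rfl⟩ := this
    simp [isPickV, pk]
  · have hl := (List.getElem?_eq_some_iff.1 h2).1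
    simp at hl
    have : p = m i j + 1 := by omega
    subst this
    rw [List.getElem?_cons_succ, List.getElem?_append_left (by simp)] at h1
    have := List.mem_of_getElem? h1
    rw [List.mem_ofFn] at this
    obtain ⟨k, rfl⟩ := this
    simp [isPickV, pk]

theorem decomp (N : ℕ) : ∀ (r : List (TBV n m)) (s t : Fin n × Fin 3), r.length ≤ N →
    r.head? = some (Sum.inl s) → r.getLast? = some (Sum.inl t) → r.IsChain Adj → NoReversal r →
    ∃ ss, Valid s ss t ∧ r = Sum.inl s :: ex m ss := by
  induction N with
  | zero =>
    intro r s t h0 h1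
    cases r <;> simp at h0 h1
  | succ N ih =>
    intro r s t h0 h1 h2 h3 h4
    match r, h0, h1, h2, h3, h4 with
    | [x], h0, h1, h2, h3, h4 =>
      simp at h1 h2
      subst h1
      simp at h2
      exact ⟨[], h2, by simp [ex]⟩
    | x :: y :: r, h0, h1, h2, h3, h4 =>
      simp at h1
      subst h1
      cases y with
      | inl u =>
        obtain ⟨ss, e1, e2⟩ := ih (Sum.inl u :: r) u t (by simpa using h0) rfl
          (by simpa using h2) (by simpa using h3.tail) (noRev_drop h4 1 (u := u) (by simp))
        have hadj := (List.isChain_cons_cons.1 h3).1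
        rcases hadj with ⟨i, i', j, h, h'⟩ | ⟨i, j, h⟩
        · simp only [art, Sum.inl.injEq] at h'
          rcases h' with ⟨rfl, rfl⟩ | ⟨rfl, rfl⟩
          · exact ⟨.h i i' j :: ss, ⟨rfl, Or.inl h, e1⟩, by rw [e2]; rfl⟩
          · exact ⟨.h i' i j :: ss, ⟨rfl, Or.inr h, e1⟩, by rw [e2]; rfl⟩
        · rcases h with h | h
          · simpa [isPickV] using subPath_col h
          · simpa [isPickV] using subPath_col h
      | inr w =>
        obtain ⟨i, j, k⟩ := w
        obtain ⟨q, dir, g1, g2, g3⟩ := h4 1 i j k (by simp [pk])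
        have hq : q = 0 := by
          by_contra hq
          have : q = 1 := by omega
          subst this
          rw [TravAt, dirPath_eq] at g1
          simp at g1
        subst hq
        rw [TravAt, dirPath_eq, List.drop_zero] at g1
        obtain ⟨z, hz⟩ := g1
        have hs : s = (Stp.v i j dir).src := by
          simp at hz; exact hz.1.symm
        set r0 := (Sum.inl s :: Sum.inr ⟨i, j, k⟩ :: r : List (TBV n m)) with hr0
        have hz' : r0 = (Sum.inl s :: (Stp.v i j dir).mid m) ++
            Sum.inl (Stp.v i j dir).tgt :: z := by
          rw [← hz, hs]; simp
        have hd : r0.drop (m i j + 2) = Sum.inl (Stp.v i j dir).tgt :: z := by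
          rw [hz', List.drop_left']; simp [mid_len]
        obtain ⟨ss, e1, e2⟩ := ih (Sum.inl (Stp.v i j dir).tgt :: z) (Stp.v i j dir).tgt t
          (by
            have := congrArg List.length hz'
            simp only [List.length_append, List.length_cons, mid_len] at this ⊢
            omega) rfl
          (by rw [hz', List.getLast?_append] at h2
              simp only [List.getLast?_cons] at h2 ⊢
              simpa using h2)
          (by rw [← hd]; exact h3.drop _)
          (by rw [← hd]
              refine noRev_drop h4 _ (u := (Stp.v i j dir).tgt) ?_
              have := congrArg List.head? hd
              rw [List.head?_drop] at this
              simpa using this)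
        refine ⟨.v i j dir :: ss, ⟨hs.symm, trivial, e1⟩, ?_⟩
        rw [hz', e2]
        simp [ex]

/-! first positions -/

def FirstAt (ss : List (Stp n)) (P : List (Fin n × Fin 2 × Bool)) (a : Fin n) (j : Fin 2)
    (dir : Bool) : Prop :=
  (∃ Q, vs ss = P ++ (a, j, dir) :: Q) ∧ ∀ dir', (a, j, dir') ∉ P

theorem mem_vs {ss : List (Stp n)} {a : Fin n} {j : Fin 2} {dir : Bool} :
    (a, j, dir) ∈ vs ss ↔ Stp.v a j dir ∈ ss := by
  induction ss with
  | nil => simp [vs]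
  | cons st ss ih => cases st <;> simp [vs, ih]

theorem vs_split {ss : List (Stp n)} {P Q : List (Fin n × Fin 2 × Bool)} {a : Fin n} {j : Fin 2}
    {dir : Bool} (h : vs ss = P ++ (a, j, dir) :: Q) :
    ∃ A B, ss = A ++ Stp.v a j dir :: B ∧ vs A = P := by
  induction ss generalizing P with
  | nil => simp [vs] at h
  | cons st ss ih =>
    cases st with
    | h x y z =>
      obtain ⟨A, B, e1, e2⟩ := ih (P := P) h
      exact ⟨.h x y z :: A, B, by simp [e1], e2⟩
    | v x y z =>
      cases P with
      | nil =>
        simp [vs] at h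
        obtain ⟨⟨rfl, rfl, rfl⟩, h⟩ := h
        exact ⟨[], ss, rfl, rfl⟩
      | cons p P =>
        simp [vs] at h
        obtain ⟨A, B, e1, e2⟩ := ih (P := P) h.2
        exact ⟨.v x y z :: A, B, by simp [e1], by simp [vs, e2, h.1]⟩

theorem split_cases {α : Type*} {A A' B B' : List α} {x x' : α}
    (h : A ++ x :: B = A' ++ x' :: B') :
    (∃ C, A = A' ++ x' :: C) ∨ (∃ C, A' = A ++ x :: C) ∨ (A = A' ∧ x = x' ∧ B = B') := by
  rw [List.append_eq_append_iff] at h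
  rcases h with ⟨C, h1, h2⟩ | ⟨C, h1, h2⟩
  · cases C with
    | nil => simp at h1 h2; exact Or.inr (Or.inr ⟨h1.symm, h2.1, h2.2⟩)
    | cons c C => simp at h2; exact Or.inr (Or.inl ⟨C, by rw [h1, h2.1]⟩)
  · cases C with
    | nil => simp at h1 h2; exact Or.inr (Or.inr ⟨h1, h2.1.symm, h2.2.symm⟩)
    | cons c C => simp at h2; exact Or.inl ⟨C, by rw [h1, h2.1]⟩

theorem firstPos_eq {s t : Fin n × Fin 3} {ss : List (Stp n)} (hv : Valid s ss t)
    {A B : List (Stp n)} {a : Fin n} {j : Fin 2} {dir : Bool}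
    (h : ss = A ++ Stp.v a j dir :: B) (hA : ∀ dir', (a, j, dir') ∉ vs A) :
    firstPos (Sum.inl s :: ex m ss) a j = (ex m A).length := by
  apply le_antisymm
  · exact Nat.sInf_le ⟨dir, trav_of_split hv h⟩
  · refine le_csInf ⟨_, dir, trav_of_split hv h⟩ ?_
    rintro q ⟨dir', hq⟩
    obtain ⟨A', B', e1, rfl⟩ := trav_split hv hq
    rw [h] at e1
    rcases split_cases e1 with ⟨C, hC⟩ | ⟨C, hC⟩ | ⟨hC, -⟩
    · exact absurd (mem_vs.2 (by rw [hC]; simp)) (hA dir')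
    · rw [hC, ex_append]; simp
    · rw [hC]

theorem FirstAt.trav {s t : Fin n × Fin 3} {ss : List (Stp n)} (hv : Valid s ss t)
    {P : List (Fin n × Fin 2 × Bool)} {a : Fin n} {j : Fin 2} {dir : Bool}
    (h : FirstAt ss P a j dir) :
    TravAt (Sum.inl s :: ex m ss) (firstPos (Sum.inl s :: ex m ss) a j) a j dir := by
  obtain ⟨⟨Q, hQ⟩, h2⟩ := h
  obtain ⟨A, B, e1, e2⟩ := vs_split hQ
  rw [firstPos_eq hv e1 (by rwa [e2])]
  exact trav_of_split hv e1

theorem FirstAt.lt {s t : Fin n × Fin 3} {ss : List (Stp n)} (hv : Valid s ss t)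
    {P P' : List (Fin n × Fin 2 × Bool)} {a a' : Fin n} {j j' : Fin 2} {dir dir' : Bool}
    (h : FirstAt ss P a j dir) (h' : FirstAt ss P' a' j' dir') (hl : P.length < P'.length) :
    firstPos (Sum.inl s :: ex m ss) a j < firstPos (Sum.inl s :: ex m ss) a' j' := by
  obtain ⟨⟨Q, hQ⟩, h2⟩ := h
  obtain ⟨A, B, e1, e2⟩ := vs_split hQ
  obtain ⟨⟨Q', hQ'⟩, h2'⟩ := h'
  obtain ⟨A', B', e1', e2'⟩ := vs_split hQ'
  rw [firstPos_eq hv e1 (by rwa [e2]), firstPos_eq hv e1' (by rwa [e2'])]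
  have := e1.symm.trans e1'
  rcases split_cases this with ⟨C, hC⟩ | ⟨C, hC⟩ | ⟨hC, -⟩
  · rw [← e2, ← e2', hC, vs_append] at hl; simp at hl
  · rw [hC, ex_append, ex]; simp
  · rw [← e2, ← e2', hC] at hl; simp at hl

def fdir (ss : List (Stp n)) (a : Fin n) (j : Fin 2) : Bool :=
  (((vs ss).find? (fun y => decide (y.1 = a ∧ y.2.1 = j))).map (fun y => y.2.2)).getD true

theorem FirstAt.fdir {ss : List (Stp n)}
    {P : List (Fin n × Fin 2 × Bool)} {a : Fin n} {j : Fin 2} {dir : Bool}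
    (h : FirstAt ss P a j dir) : fdir ss a j = dir := by
  obtain ⟨⟨Q, hQ⟩, h2⟩ := h
  have : P.find? (fun y => decide (y.1 = a ∧ y.2.1 = j)) = none := by
    rw [List.find?_eq_none]
    rintro ⟨x, y, z⟩ hx hh
    simp at hh
    obtain ⟨rfl, rfl⟩ := hh
    exact h2 _ hx
  rw [TwoBlock.fdir, hQ, List.find?_append, this]
  simp

theorem exists_first {l : List (Fin n × Fin 2 × Bool)} {a : Fin n} {j : Fin 2} {dir : Bool}
    (h : (a, j, dir) ∈ l) : ∃ P dir', (∃ Q, l = P ++ (a, j, dir') :: Q) ∧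
      ∀ dir'', (a, j, dir'') ∉ P := by
  induction l with
  | nil => simp at h
  | cons x l ih =>
    by_cases hx : x.1 = a ∧ x.2.1 = j
    · obtain ⟨x1, x2, x3⟩ := x
      obtain ⟨rfl, rfl⟩ := hx
      exact ⟨[], x3, ⟨l, rfl⟩, by simp⟩
    · have hne : ∀ dir'', (a, j, dir'') ≠ x := by
        rintro dir'' rfl; simp at hx
      rcases List.mem_cons.1 h with h | h
      · exact absurd h (hne _)
      · obtain ⟨P, dir', ⟨Q, hQ⟩, h2⟩ := ih h
        refine ⟨x :: P, dir', ⟨Q, by simp [hQ]⟩, ?_⟩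
        intro d hd
        rcases List.mem_cons.1 hd with hd | hd
        · exact hne _ hd
        · exact h2 _ hd

def alt (j : Fin 2) : Bool → List (Fin n) → List (Fin n × Fin 2 × Bool)
  | _, [] => []
  | b, a :: l => (a, j, b) :: alt j (!b) l

theorem alt_len (j : Fin 2) (b : Bool) (l : List (Fin n)) : (alt j b l).length = l.length := by
  induction l generalizing b with
  | nil => rfl
  | cons a l ih => simp [alt, ih]

theorem mem_alt {j : Fin 2} {b : Bool} {l : List (Fin n)} {x : Fin n × Fin 2 × Bool}
    (h : x ∈ alt j b l) : x.1 ∈ l ∧ x.2.1 = j := by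
  induction l generalizing b with
  | nil => simp [alt] at h
  | cons a l ih =>
    rcases List.mem_cons.1 h with rfl | h
    · simp
    · exact ⟨List.mem_cons_of_mem _ (ih h).1, (ih h).2⟩

theorem alt_first {ss : List (Stp n)} {j : Fin 2} (l : List (Fin n)) :
    ∀ (b : Bool) (P Q : List (Fin n × Fin 2 × Bool)), vs ss = P ++ alt j b l ++ Q → l.Nodup →
    (∀ a ∈ l, ∀ dir, (a, j, dir) ∉ P) →
    (∀ a ∈ l, ∃ P' dir, FirstAt ss P' a j dir ∧ P.length ≤ P'.length ∧
      P'.length < P.length + l.length) ∧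
    l.IsChain (fun a a' => ∃ P1 P2 d, FirstAt ss P1 a j d ∧ FirstAt ss P2 a' j (!d) ∧
      P1.length < P2.length) := by
  induction l with
  | nil => intros; simp
  | cons a l ih =>
    intro b P Q h1 h2 h3
    have hn := List.nodup_cons.1 h2
    have hfa : FirstAt ss P a j b := ⟨⟨alt j (!b) l ++ Q, by rw [h1]; simp [alt]⟩,
      h3 a (by simp)⟩
    have h3' : ∀ a' ∈ l, ∀ dir, (a', j, dir) ∉ P ++ [(a, j, b)] := by
      intro a' ha' dir hm
      rcases List.mem_append.1 hm with hm | hm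
      · exact h3 a' (by simp [ha']) dir hm
      · simp at hm
        exact hn.1 (hm.1 ▸ ha')
    have hvs : vs ss = (P ++ [(a, j, b)]) ++ alt j (!b) l ++ Q := by rw [h1]; simp [alt]
    obtain ⟨i1, i2⟩ := ih (!b) (P ++ [(a, j, b)]) Q hvs hn.2 h3'
    constructor
    · intro a' ha'
      rcases List.mem_cons.1 ha' with rfl | ha'
      · exact ⟨P, b, hfa, le_rfl, by simp⟩
      · obtain ⟨P', dir, g1, g2, g3⟩ := i1 a' ha'
        refine ⟨P', dir, g1, ?_, ?_⟩ <;> simp at g2 g3 ⊢ <;> omega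
    · cases l with
      | nil => simp
      | cons a' l =>
        rw [List.isChain_cons_cons]
        refine ⟨⟨P, P ++ [(a, j, b)], b, hfa, ⟨⟨alt j (!(!b)) l ++ Q, ?_⟩, h3' a' (by simp)⟩, by simp⟩, i2⟩
        rw [hvs]; simp [alt]

/-! counts -/

def cnt (j : Fin 2) (ss : List (Stp n)) : ℕ := ((vs ss).filter (fun x => decide (x.2.1 = j))).length

theorem cnt_add (ss : List (Stp n)) : (vs ss).length = cnt 0 ss + cnt 1 ss := by
  unfold cnt
  induction vs ss with
  | nil => rfl
  | cons x l ih =>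
    obtain ⟨a, j, d⟩ := x
    fin_cases j <;> simp at ih ⊢ <;> omega

theorem cnt_ge {ss : List (Stp n)} {j : Fin 2} {K : Finset (Fin n)}
    (h : ∀ a ∈ K, ∃ dir, (a, j, dir) ∈ vs ss) : K.card ≤ cnt j ss := by
  have : K ⊆ (((vs ss).filter (fun x => decide (x.2.1 = j))).map (fun x => x.1)).toFinset := by
    intro a ha
    obtain ⟨dir, hd⟩ := h a ha
    simp
    cases dir
    · exact Or.inl hd
    · exact Or.inr hd
  refine (Finset.card_le_card this).trans ((List.toFinset_card_le _).trans ?_)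
  simp [cnt]

theorem cnt0_even {s t : Fin n × Fin 3} {ss : List (Stp n)} (hv : Valid s ss t) :
    Even (cnt 0 ss) ↔ (s.2 = 0 ↔ t.2 = 0) := by
  induction ss generalizing s with
  | nil => cases hv; simp [cnt, vs]
  | cons st ss ih =>
    have h := ih hv.2.2
    rw [← hv.1]
    cases st with
    | h => exact h
    | v a j d =>
      unfold cnt at h ⊢
      fin_cases j <;> cases d <;> simp [vs, Stp.src, Stp.tgt, lev, Nat.even_add_one] at h ⊢ <;>
        first | exact h | (rw [← Nat.not_even_iff_odd]; tauto)

theorem cnt1_even {s t : Fin n × Fin 3} {ss : List (Stp n)} (hv : Valid s ss t) :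
    Even (cnt 1 ss) ↔ (s.2 = 2 ↔ t.2 = 2) := by
  induction ss generalizing s with
  | nil => cases hv; simp [cnt, vs]
  | cons st ss ih =>
    have h := ih hv.2.2
    rw [← hv.1]
    cases st with
    | h => exact h
    | v a j d =>
      unfold cnt at h ⊢
      fin_cases j <;> cases d <;> simp [vs, Stp.src, Stp.tgt, lev, Nat.even_add_one] at h ⊢ <;>
        first | exact h | (rw [← Nat.not_even_iff_odd]; tauto)

/-! lengths -/

theorem pathLen_cons_cons {α : Type*} (f : α → α → ℝ) (x y : α) (l : List α) :
    pathLen f (x :: y :: l) = f x y + pathLen f (y :: l) := by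
  simp [pathLen]

theorem pathLen_single {α : Type*} (f : α → α → ℝ) (x : α) :
    pathLen f [x] = 0 := by
  simp [pathLen]

theorem pathLen_glue {α : Type*} (f : α → α → ℝ) (x y : α) (l l' : List α) :
    pathLen f (x :: (l ++ y :: l')) = pathLen f (x :: (l ++ [y])) + pathLen f (y :: l') := by
  induction l generalizing x with
  | nil => simp [pathLen_cons_cons, pathLen_single]
  | cons a l ih => simp only [List.cons_append, pathLen_cons_cons, ih]; ring

theorem pathLen_congr {α : Type*} (f g : α → α → ℝ) (l : List α)
    (h : l.IsChain (fun x y => f x y = g x y)) : pathLen f l = pathLen g l := by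
  induction l with
  | nil => rfl
  | cons x l ih =>
    cases l with
    | nil => rfl
    | cons y l =>
      rw [List.isChain_cons_cons] at h
      rw [pathLen_cons_cons, pathLen_cons_cons, ih h.2, h.1]

theorem pathLen_add {α : Type*} (f g : α → α → ℝ) (l : List α) :
    pathLen (fun x y => f x y + g x y) l = pathLen f l + pathLen g l := by
  simp [pathLen]

theorem pathLen_reverse {α : Type*} (f : α → α → ℝ) (hf : ∀ x y, f x y = f y x) (l : List α) :
    pathLen f l.reverse = pathLen f l := by
  induction l with
  | nil => rfl
  | cons x l ih =>
    cases l with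
    | nil => rfl
    | cons y l =>
      rw [pathLen_cons_cons, ← ih]
      simp only [List.reverse_cons, List.append_assoc, List.singleton_append]
      cases hl : l.reverse with
      | nil => simp [pathLen_cons_cons, pathLen_single, hf]
      | cons z l' =>
        simp only [List.cons_append]
        rw [pathLen_glue f z y l' [x]]
        rw [pathLen_cons_cons, pathLen_single, hf y x]
        simp; ring

def fV (len : TBV n m → TBV n m → ℝ) (x y : TBV n m) : ℝ :=
  if isPickV x || isPickV y then len x y else 0

def fH (len : TBV n m → TBV n m → ℝ) (x y : TBV n m) : ℝ :=
  if isPickV x || isPickV y then 0 else len x y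

theorem vertLen_eq (len : TBV n m → TBV n m → ℝ) (r : List (TBV n m)) :
    vertLen len r = pathLen (fV len) r := rfl

theorem pathLen_VH (len : TBV n m → TBV n m → ℝ) (r : List (TBV n m)) :
    pathLen len r = vertLen len r + pathLen (fH len) r := by
  rw [vertLen_eq, ← pathLen_add]
  congr 1
  funext x y
  unfold fV fH
  split_ifs <;> simp

theorem dirPath_pick (i : Fin n) (j : Fin 2) (dir : Bool) :
    (dirPath i j dir : List (TBV n m)).IsChain
      (fun x y => (isPickV x || isPickV y) = true) := by
  have h : (subPath i j : List (TBV n m)).IsChain (fun x y => (isPickV x || isPickV y) = true) :=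
    (adjIn_chain _).imp fun a b hab => subPath_col hab
  cases dir
  · simp only [dirPath]
    rw [if_neg (by simp), List.isChain_reverse]
    exact h.imp fun a b hab => by rw [Bool.or_comm]; exact hab
  · simpa [dirPath] using h

section
variable {len : TBV n m → TBV n m → ℝ} {d : ℝ}

theorem pathLen_dirPath (hsymm : ∀ x y, len x y = len y x)
    (hvert : ∀ i j, pathLen len (subPath i j) = d) (i : Fin n) (j : Fin 2) (dir : Bool) :
    pathLen len (dirPath i j dir) = d := by
  cases dir
  · simp only [dirPath]
    rw [if_neg (by simp), pathLen_reverse len hsymm, hvert]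
  · simpa [dirPath] using hvert i j

theorem vert_ex (hsymm : ∀ x y, len x y = len y x)
    (hvert : ∀ i j, pathLen len (subPath i j) = d)
    {s t : Fin n × Fin 3} {ss : List (Stp n)} (hv : Valid s ss t) :
    vertLen len (Sum.inl s :: ex m ss) = (vs ss).length * d := by
  rw [vertLen_eq]
  induction ss generalizing s with
  | nil => simp [ex, vs, pathLen_single]
  | cons st ss ih =>
    rw [ex, pathLen_glue, ih hv.2.2, ← hv.1]
    cases st with
    | h => simp [Stp.mid, pathLen_cons_cons, pathLen_single, vs, fV, isPickV]
    | v i j dir =>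
      rw [← dirPath_eq, pathLen_congr (fV len) len, pathLen_dirPath hsymm hvert]
      · simp [vs]; ring
      · exact (dirPath_pick i j dir).imp fun a b hab => by rw [fV, if_pos hab]

end

section
variable {m : Fin (n + 1) → Fin 2 → ℕ}

def xs (len : TBV (n + 1) m → TBV (n + 1) m → ℝ) (k : ℕ) : ℝ :=
  ∑ t ∈ Finset.range k, if h : t + 1 < n + 1 then
    len (art ⟨t, by omega⟩ 0) (art ⟨t + 1, h⟩ 0) else 0

def col : TBV n m' → Fin n
  | Sum.inl p => p.1
  | Sum.inr w => w.1

variable {len : TBV (n + 1) m → TBV (n + 1) m → ℝ}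

theorem xs_succ (i i' : Fin (n + 1)) (h : (i' : ℕ) = i + 1) :
    xs len i' = xs len i + len (art i 0) (art i' 0) := by
  unfold xs
  rw [h, Finset.sum_range_succ, dif_pos (by omega)]
  congr 3
  apply Fin.ext; simp [h]

theorem xs_mono (hpos : ∀ x y, Adj x y → 0 < len x y) : Monotone (xs len) := by
  refine monotone_nat_of_le_succ fun k => ?_
  unfold xs
  rw [Finset.sum_range_succ]
  have : 0 ≤ (if h : k + 1 < n + 1 then
    len (art ⟨k, by omega⟩ 0) (art ⟨k + 1, h⟩ 0) else 0) := by
    split_ifs with h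
    · exact (hpos _ _ (Or.inl ⟨⟨k, by omega⟩, ⟨k + 1, h⟩, 0, rfl, Or.inl ⟨rfl, rfl⟩⟩)).le
    · exact le_rfl
  linarith

theorem mem_subPath_col {i : Fin n} {j : Fin 2} {m : Fin n → Fin 2 → ℕ} {x : TBV n m}
    (h : x ∈ subPath i j) : col x = i := by
  simp only [subPath, List.mem_cons, List.mem_append, List.mem_ofFn, List.not_mem_nil, or_false] at h
  rcases h with rfl | ⟨k, rfl⟩ | rfl <;> rfl

theorem adj_x (hsymm : ∀ x y, len x y = len y x)
    (hpos : ∀ x y, Adj x y → 0 < len x y)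
    (hcross : ∀ (i i' : Fin (n + 1)), (i' : ℕ) = (i : ℕ) + 1 →
      ∀ j j' : Fin 3, len (art i j) (art i' j) = len (art i j') (art i' j'))
    {x y : TBV (n + 1) m} (h : Adj x y) :
    |xs len (col x) - xs len (col y)| ≤ fH len x y := by
  have h0 : 0 ≤ fH len x y := by
    unfold fH; split_ifs
    · exact le_rfl
    · exact (hpos _ _ h).le
  have hcol : ∀ i j, adjIn (subPath i j) x y ∨ adjIn (subPath i j) y x → col x = col y := by
    rintro i j (⟨p, h1, h2⟩ | ⟨p, h1, h2⟩) <;>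
      rw [mem_subPath_col (List.mem_of_getElem? h1), mem_subPath_col (List.mem_of_getElem? h2)]
  rcases h with ⟨i, i', j, h, h'⟩ | ⟨i, j, h⟩
  · have e := xs_succ (len := len) i i' h
    have hp := hpos (art i 0) (art i' 0) (Or.inl ⟨i, i', 0, h, Or.inl ⟨rfl, rfl⟩⟩)
    rcases h' with ⟨rfl, rfl⟩ | ⟨rfl, rfl⟩
    · simp only [col, art, fH, isPickV] at *
      simp
      rw [e, hcross i i' h j 0, abs_le]
      constructor <;> linarith
    · simp only [col, art, fH, isPickV] at *
      simp
      rw [e, hsymm (Sum.inl (i', j)), hcross i i' h j 0, abs_le]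
      constructor <;> linarith
  · rw [hcol i j h]; simpa using h0

def S {α : Type*} (f : α → α → ℝ) (r : List α) (x : α) (q : ℕ) : ℝ :=
  ∑ t ∈ Finset.range q, f (r.getD t x) (r.getD (t + 1) x)

theorem S_eq {α : Type*} (f : α → α → ℝ) (r : List α) (x : α) :
    pathLen f r = S f r x (r.length - 1) := by
  induction r with
  | nil => simp [pathLen, S]
  | cons a r ih =>
    cases r with
    | nil => simp [pathLen, S]
    | cons b r =>
      rw [pathLen_cons_cons, ih]
      simp only [S, List.length_cons, Nat.add_sub_cancel]
      rw [Finset.sum_range_succ' _ r.length]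
      rw [add_comm]; simp

theorem S_lb {α : Type*} (f : α → α → ℝ) (X : α → ℝ) (r : List α) (x : α)
    (h : r.IsChain (fun a b => |X a - X b| ≤ f a b)) (p q : ℕ) (hpq : p ≤ q) (hq : q < r.length) :
    |X (r.getD p x) - X (r.getD q x)| ≤ S f r x q - S f r x p := by
  induction q, hpq using Nat.le_induction with
  | base => simp
  | succ q hpq ih =>
    have i1 := ih (by omega)
    rw [List.isChain_iff_getElem] at h
    have i2 := h q (by omega)
    have e1 : r.getD q x = r[q] := by simp [List.getD, List.getElem?_eq_getElem (show q < r.length by omega)]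
    have e2 : r.getD (q + 1) x = r[q + 1] := by simp [List.getD, List.getElem?_eq_getElem hq]
    have : S f r x (q + 1) = S f r x q + f r[q] r[q+1] := by
      unfold S; rw [Finset.sum_range_succ, e1, e2]
    rw [this, e2]
    rw [e1] at i1
    have := abs_sub_le (X (r.getD p x)) (X r[q]) (X r[q+1])
    linarith

def hc (len : TBV (n + 1) m → TBV (n + 1) m → ℝ) : List (Stp (n + 1)) → ℝ
  | [] => 0
  | .h i i' _ :: ss => |xs len i - xs len i'| + hc len ss
  | .v _ _ _ :: ss => hc len ss

theorem hc_append (A B : List (Stp (n + 1))) : hc len (A ++ B) = hc len A + hc len B := by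
  induction A with
  | nil => simp [hc]
  | cons a A ih => cases a <;> simp [hc, ih, add_assoc]

theorem hor_ex (hsymm : ∀ x y, len x y = len y x)
    (hpos : ∀ x y, Adj x y → 0 < len x y)
    (hcross : ∀ (i i' : Fin (n + 1)), (i' : ℕ) = (i : ℕ) + 1 →
      ∀ j j' : Fin 3, len (art i j) (art i' j) = len (art i j') (art i' j'))
    {s t : Fin (n + 1) × Fin 3} {ss : List (Stp (n + 1))} (hv : Valid s ss t) :
    pathLen (fH len) (Sum.inl s :: ex m ss) = hc len ss := by
  induction ss generalizing s with
  | nil => simp [ex, hc, pathLen_single]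
  | cons st ss ih =>
    rw [ex, pathLen_glue, ih hv.2.2, ← hv.1]
    cases st with
    | h i i' j =>
      simp only [hc, Stp.mid, List.nil_append, pathLen_cons_cons, pathLen_single, add_zero]
      congr 1
      have key : ∀ a a' : Fin (n + 1), (a' : ℕ) = a + 1 →
          len (art a j) (art a' j) = xs len a' - xs len a ∧ 0 ≤ xs len a' - xs len a := by
        intro a a' h
        have hp := hpos (art a 0) (art a' 0) (Or.inl ⟨a, a', 0, h, Or.inl ⟨rfl, rfl⟩⟩)
        rw [xs_succ a a' h, hcross a a' h j 0]
        constructor <;> linarith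
      rcases hv.2.1 with h | h
      · obtain ⟨k1, k2⟩ := key i i' h
        rw [abs_sub_comm, abs_of_nonneg k2, ← k1]
        simp [fH, isPickV, Stp.src, Stp.tgt, art]
      · obtain ⟨k1, k2⟩ := key i' i h
        rw [abs_of_nonneg k2, ← k1, hsymm]
        simp [fH, isPickV, Stp.src, Stp.tgt, art]
    | v i j dir =>
      rw [← dirPath_eq, pathLen_congr (fH len) (fun _ _ => 0)]
      · simp [hc, pathLen]
      · exact (dirPath_pick i j dir).imp fun a b hab => by rw [fH, if_pos hab]

theorem hmove_right (hpos : ∀ x y, Adj x y → 0 < len x y) (j : Fin 3) (k : ℕ) :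
    ∀ i i' : Fin (n + 1), (i' : ℕ) = i + k →
    (∃ ss, Valid (i, j) ss (i', j) ∧ vs ss = [] ∧ hc len ss = xs len i' - xs len i) ∧
    (∃ ss, Valid (i', j) ss (i, j) ∧ vs ss = [] ∧ hc len ss = xs len i' - xs len i) := by
  induction k with
  | zero =>
    intro i i' h
    have : i' = i := Fin.ext (by simpa using h)
    subst this
    exact ⟨⟨[], rfl, rfl, by simp [hc]⟩, ⟨[], rfl, rfl, by simp [hc]⟩⟩
  | succ k ih =>
    intro i i' h
    let i1 : Fin (n + 1) := ⟨i + k, by omega⟩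
    obtain ⟨⟨A, a1, a2, a3⟩, ⟨B, b1, b2, b3⟩⟩ := ih i i1 rfl
    have hs : (i' : ℕ) = i1 + 1 := by simp [i1, h]; omega
    have hx : xs len i1 ≤ xs len i' := xs_mono hpos (by omega)
    constructor
    · refine ⟨A ++ [.h i1 i' j], valid_append a1 (show Valid (i1, j) [.h i1 i' j] (i', j) from ⟨rfl, Or.inl hs, rfl⟩), ?_, ?_⟩
      · rw [vs_append, a2]; rfl
      · rw [hc_append, a3]; simp only [hc]
        rw [abs_sub_comm, abs_of_nonneg (by linarith)]; ring
    · refine ⟨.h i' i1 j :: B, ⟨rfl, Or.inr hs, b1⟩, b2, ?_⟩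
      simp only [hc]; rw [b3, abs_of_nonneg (by linarith)]; ring

theorem hmove (hpos : ∀ x y, Adj x y → 0 < len x y) (j : Fin 3) (i i' : Fin (n + 1)) :
    ∃ ss, Valid (i, j) ss (i', j) ∧ vs ss = [] ∧ hc len ss = |xs len i - xs len i'| := by
  rcases le_total i i' with h | h
  · obtain ⟨ss, h1, h2, h3⟩ := (hmove_right hpos j (i' - i : ℕ) i i' (by
      have : (i : ℕ) ≤ i' := h
      omega)).1
    have : xs len i ≤ xs len i' := xs_mono hpos h
    exact ⟨ss, h1, h2, by rw [h3, abs_sub_comm, abs_of_nonneg (by linarith)]⟩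
  · obtain ⟨ss, h1, h2, h3⟩ := (hmove_right hpos j (i - i' : ℕ) i' i (by
      have : (i' : ℕ) ≤ i := h
      omega)).2
    have : xs len i' ≤ xs len i := xs_mono hpos h
    exact ⟨ss, h1, h2, by rw [h3, abs_of_nonneg (by linarith)]⟩

theorem serp (hpos : ∀ x y, Adj x y → 0 < len x y) (j : Fin 2) (l : List (Fin (n + 1))) :
    ∀ (i : Fin (n + 1)) (b : Bool), (i :: l).Pairwise (· ≤ ·) →
    ∃ ss, Valid (i, lev j b) ss (l.getLast?.getD i, lev j (if Even l.length then b else !b)) ∧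
      vs ss = alt j b l ∧ hc len ss = xs len (l.getLast?.getD i : Fin (n + 1)) - xs len i := by
  induction l with
  | nil => intro i b _; exact ⟨[], by simp [Valid], rfl, by simp [hc]⟩
  | cons a l ih =>
    intro i b h
    obtain ⟨A, a1, a2, a3⟩ := hmove (len := len) hpos (lev j b) i a
    obtain ⟨B, b1, b2, b3⟩ := ih a (!b) (List.pairwise_cons.1 h).2
    have hia : i ≤ a := (List.pairwise_cons.1 h).1 a (by simp)
    have : xs len i ≤ xs len a := xs_mono hpos hia
    have hlast : (a :: l).getLast?.getD i = l.getLast?.getD a := by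
      rw [List.getLast?_cons]; rfl
    rw [hlast]
    refine ⟨A ++ .v a j b :: B, valid_append a1 ⟨rfl, trivial, ?_⟩, ?_, ?_⟩
    · have e : (if Even (a :: l).length then b else !b) = (if Even l.length then !b else !(!b)) := by
        simp only [List.length_cons, Nat.even_add_one]
        split_ifs <;> simp_all
      rw [e]
      exact b1
    · rw [vs_append, a2]; simp [vs, alt, b2]
    · rw [hc_append, a3]; simp only [hc]; rw [b3, abs_sub_comm, abs_of_nonneg (by linarith)]; ring
end

section
variable {m : Fin (n + 1) → Fin 2 → ℕ} {len : TBV (n + 1) m → TBV (n + 1) m → ℝ}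

theorem pathLen_nonneg {α : Type*} (f : α → α → ℝ) (l : List α)
    (h : l.IsChain (fun x y => 0 ≤ f x y)) : 0 ≤ pathLen f l := by
  induction l with
  | nil => simp [pathLen]
  | cons x l ih =>
    cases l with
    | nil => simp [pathLen]
    | cons y l =>
      rw [List.isChain_cons_cons] at h
      rw [pathLen_cons_cons]
      have := ih h.2
      linarith [h.1]

theorem trav_col {r : List (TBV n m')} {q : ℕ} {a : Fin n} {j : Fin 2} {dir : Bool}
    (h : TravAt r q a j dir) (x : TBV n m') : q < r.length ∧ col (r.getD q x) = a := by
  rw [TravAt, dirPath_eq] at h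
  have hq : q < r.length := by
    by_contra hlt
    rw [List.drop_eq_nil_of_le (by omega)] at h
    simp at h
  refine ⟨hq, ?_⟩
  rw [List.drop_eq_getElem_cons hq] at h
  have := (List.cons_prefix_cons.1 h).1
  simp [List.getD, List.getElem?_eq_getElem hq, ← this, col, Stp.src]

theorem hor_lb (hsymm : ∀ x y, len x y = len y x)
    (hpos : ∀ x y, Adj x y → 0 < len x y)
    (hcross : ∀ (i i' : Fin (n + 1)), (i' : ℕ) = (i : ℕ) + 1 →
      ∀ j j' : Fin 3, len (art i j) (art i' j) = len (art i j') (art i' j'))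
    {r : List (TBV (n + 1) m)} (hr : IsTourFrom (art 0 0) r) (a b c : Fin (n + 1)) (qa qb qc : ℕ)
    (hab : qa ≤ qb) (hbc : qb ≤ qc) (hc : qc < r.length)
    (ha : col (r.getD qa (art 0 0)) = a) (hb : col (r.getD qb (art 0 0)) = b)
    (hcc : col (r.getD qc (art 0 0)) = c) :
    |xs len 0 - xs len a| + |xs len a - xs len b| + |xs len b - xs len c| + |xs len c - xs len 0|
      ≤ pathLen (fH len) r := by
  obtain ⟨h1, h2, h3⟩ := hr
  have hch : r.IsChain (fun x y => |xs len (col x) - xs len (col y)| ≤ fH len x y) :=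
    List.IsChain.imp (fun x y h => adj_x hsymm hpos hcross h) h3
  have key := S_lb (fH len) (fun x => xs len (col x)) r (art 0 0) hch
  have k1 := key 0 qa (by omega) (by omega)
  have k2 := key qa qb (by omega) (by omega)
  have k3 := key qb qc (by omega) (by omega)
  have k4 := key qc (r.length - 1) (by omega) (by omega)
  have e0 : r.getD 0 (art 0 0) = art 0 0 := by
    rw [List.getD, ← List.head?_eq_getElem?, h1]; rfl
  have e1 : r.getD (r.length - 1) (art 0 0) = art 0 0 := by
    rw [List.getD, ← List.getLast?_eq_getElem?, h2]; rfl
  have c0 : col (art 0 0 : TBV (n + 1) m) = 0 := rfl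
  simp only [ha, hb, hcc, e0, e1, c0, Fin.val_zero] at k1 k2 k3 k4
  rw [S_eq (fH len) r (art 0 0)]
  have : S (fH len) r (art 0 0) 0 = 0 := by simp [S]
  linarith

theorem chain_first_last {f : Fin n → ℕ} (b : Fin n) (l : List (Fin n))
    (h : (b :: l).IsChain (fun x y => f x < f y)) : f b ≤ f (l.getLast?.getD b) := by
  induction l generalizing b with
  | nil => simp
  | cons c l ih =>
    rw [List.isChain_cons_cons] at h
    have := ih c h.2
    rw [List.getLast?_cons]
    simp only [Option.getD_some]
    omega

end

theorem evenlb {k c : ℕ} (h : k ≤ c) (hc : Even c) : k + k % 2 ≤ c := by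
  obtain ⟨x, rfl⟩ := hc
  omega

/-- In a two-block warehouse graph (with symmetric positive edge lengths,
corresponding horizontal edges on the three cross-aisles of equal lengths, and
every subaisle of the same vertical length `d`) under no-reversal routing,
assume the topmost-left subaisle `1` belongs to `K1`.  Then the S-shape route
`r_S^1` — an optimal no-reversal tour of type `r_S^1` traversing every
subaisle of `K1 ∪ K2` at least once — has total vertical distance `l` with:
`l − |K1 ∪ K2| · d = 2d` if `|K1|` and `|K2|` are both odd;
`l − |K1 ∪ K2| · d = 0` if `|K1|` and `|K2|` are both even; and
`l − |K1 ∪ K2| · d = d` if exactly one of `|K1|`, `|K2|` is odd. -/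
theorem sshape1_vertical_distance
    {n : ℕ} {m : Fin (n + 1) → Fin 2 → ℕ}
    (len : TBV (n + 1) m → TBV (n + 1) m → ℝ) (d : ℝ)
    (hsymm : ∀ x y, len x y = len y x)
    (hpos : ∀ x y, Adj x y → 0 < len x y)
    (hcross : ∀ (i i' : Fin (n + 1)), (i' : ℕ) = (i : ℕ) + 1 →
      ∀ j j' : Fin 3, len (art i j) (art i' j) = len (art i j') (art i' j'))
    (hvert : ∀ i j, pathLen len (subPath i j) = d)
    (K1 K2 : Finset (Fin (n + 1)))
    (h1 : (0 : Fin (n + 1)) ∈ K1) (hK2 : K2.Nonempty) :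
    ∃ r : List (TBV (n + 1) m),
      IsTourFrom (art 0 0) r ∧ NoReversal r ∧ TraversesAll K1 K2 r ∧
      SShape1 K1 K2 ⟨0, h1⟩ r ∧
      (∀ r', IsTourFrom (art 0 0) r' → NoReversal r' → TraversesAll K1 K2 r' →
        SShape1 K1 K2 ⟨0, h1⟩ r' → pathLen len r ≤ pathLen len r') ∧
      ((Odd K1.card ∧ Odd K2.card →
        vertLen len r - ((K1.card + K2.card : ℕ) : ℝ) * d = 2 * d) ∧
       (Even K1.card ∧ Even K2.card →
        vertLen len r - ((K1.card + K2.card : ℕ) : ℝ) * d = 0) ∧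
       ((Odd K1.card ∧ Even K2.card) ∨ (Even K1.card ∧ Odd K2.card) →
        vertLen len r - ((K1.card + K2.card : ℕ) : ℝ) * d = d)) := by
  classical
  have hmin : K1.min' ⟨0, h1⟩ = 0 := le_antisymm (K1.min'_le 0 h1) (Fin.zero_le _)
  obtain ⟨l1, hl1⟩ : ∃ l1, l1 = (K1.erase 0).sort (· ≤ ·) := ⟨_, rfl⟩
  have ml1 : ∀ a, a ∈ l1 ↔ a ≠ 0 ∧ a ∈ K1 := by intro a; rw [hl1]; simp
  have nd1 : l1.Nodup := by rw [hl1]; simp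
  have len1 : l1.length + 1 = K1.card := by
    rw [hl1, Finset.length_sort]; exact Finset.card_erase_add_one h1
  have pw1 : ((0 : Fin (n + 1)) :: l1).Pairwise (· ≤ ·) := by
    rw [List.pairwise_cons]
    refine ⟨fun a _ => Fin.zero_le a, ?_⟩
    rw [hl1]; exact Finset.pairwise_sort _ _
  obtain ⟨l2, hl2⟩ : ∃ l2, l2 = K2.sort (· ≤ ·) := ⟨_, rfl⟩
  have ml2 : ∀ a, a ∈ l2 ↔ a ∈ K2 := by intro a; rw [hl2]; simp
  have nd2 : l2.Nodup := by rw [hl2]; simp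
  have len2 : l2.length = K2.card := by rw [hl2, Finset.length_sort]
  have pw2 : l2.Pairwise (· ≤ ·) := by rw [hl2]; exact Finset.pairwise_sort _ _
  obtain ⟨bL, l2t, hl2c⟩ : ∃ b t, l2 = b :: t := by
    cases hh : l2 with
    | nil =>
      obtain ⟨x, hx⟩ := hK2
      rw [← ml2, hh] at hx; simp at hx
    | cons b t => exact ⟨b, t, rfl⟩
  obtain ⟨aR, haR⟩ : ∃ a, a = l1.getLast?.getD 0 := ⟨_, rfl⟩
  have haR' : (aR = 0 ∧ l1 = []) ∨ aR ∈ l1 := by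
    cases hg : l1.getLast? with
    | none => rw [hg] at haR; exact Or.inl ⟨haR, List.getLast?_eq_none_iff.1 hg⟩
    | some x => rw [hg] at haR; right; rw [haR]; exact List.mem_of_getLast? hg
  have haK : aR ∈ K1 := by
    rcases haR' with ⟨h, -⟩ | h
    · rw [h]; exact h1
    · exact ((ml1 _).1 h).2
  obtain ⟨bR, hbR⟩ : ∃ a, a = l2.getLast?.getD bL := ⟨_, rfl⟩
  have hbR2 : bR = l2t.getLast?.getD bL := by rw [hbR, hl2c, List.getLast?_cons]; rfl
  have hbR' : bR ∈ l2 := by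
    cases hg : l2.getLast? with
    | none => rw [List.getLast?_eq_none_iff.1 hg] at hl2c; simp at hl2c
    | some x => rw [hg] at hbR; rw [hbR]; exact List.mem_of_getLast? hg
  have hbK : bR ∈ K2 := (ml2 _).1 hbR'
  have hbL' : bL ∈ l2 := by rw [hl2c]; simp
  have hLR : bL ≤ bR := by
    rw [hl2c] at hbR' pw2
    rcases List.mem_cons.1 hbR' with h | h
    · exact h.ge
    · exact (List.pairwise_cons.1 pw2).1 _ h
  -- the construction
  obtain ⟨A, A1, A2, A3⟩ := serp (len := len) hpos 0 l1 0 true pw1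
  rw [← haR] at A1 A3
  obtain ⟨F, F1, F2, F3⟩ : ∃ F, Valid (aR, lev 0 (if Even l1.length then true else !true)) F (aR, 1) ∧
      vs F = (if Even l1.length then [(aR, 0, true)] else []) ∧ hc len F = 0 := by
    by_cases h : Even l1.length
    · refine ⟨[.v aR 0 true], ?_, ?_, rfl⟩
      · rw [if_pos h]; exact ⟨rfl, trivial, rfl⟩
      · rw [if_pos h]; rfl
    · refine ⟨[], ?_, ?_, rfl⟩
      · rw [if_neg h]; rfl
      · rw [if_neg h]; rfl
  obtain ⟨M, M1, M2, M3⟩ := hmove (len := len) hpos 1 aR bL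
  obtain ⟨B, B1, B2, B3⟩ := serp (len := len) hpos 1 l2 bL true (by
    rw [List.pairwise_cons]
    refine ⟨?_, pw2⟩
    intro x hx
    rw [hl2c] at hx pw2
    rcases List.mem_cons.1 hx with h | h
    · exact h.ge
    · exact (List.pairwise_cons.1 pw2).1 _ h)
  rw [← hbR] at B1 B3
  obtain ⟨G, G1, G2, G3⟩ : ∃ G, Valid (bR, lev 1 (if Even l2.length then true else !true)) G (bR, 1) ∧
      vs G = (if Even l2.length then [] else [(bR, 1, false)]) ∧ hc len G = 0 := by
    by_cases h : Even l2.length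
    · refine ⟨[], ?_, ?_, rfl⟩
      · rw [if_pos h]; rfl
      · rw [if_pos h]; rfl
    · refine ⟨[.v bR 1 false], ?_, ?_, rfl⟩
      · rw [if_neg h]; exact ⟨rfl, trivial, rfl⟩
      · rw [if_neg h]; rfl
  obtain ⟨R, R1, R2, R3⟩ := hmove (len := len) hpos 1 bR 0
  obtain ⟨C, hC⟩ : ∃ C, C = A ++ (F ++ (M ++ (B ++ (G ++ R)))) := ⟨_, rfl⟩
  obtain ⟨ss, hss⟩ : ∃ ss, ss = C ++ [Stp.v 0 0 false] := ⟨_, rfl⟩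
  have hv : Valid (0, 0) ss (0, 0) := by
    rw [hss, hC]
    refine valid_append (t := (0, 1)) ?_ ⟨rfl, trivial, rfl⟩
    exact valid_append A1 (valid_append F1 (valid_append M1 (valid_append B1
      (valid_append G1 R1))))
  have hvs : vs ss = alt 0 true l1 ++ (vs F ++ (alt 1 true l2 ++ (vs G ++ [(0, 0, false)]))) := by
    rw [hss, hC]
    simp only [vs_append, A2, M2, B2, R2, List.nil_append, List.append_nil, List.append_assoc]
    rfl
  have hhc : hc len ss = xs len aR - xs len 0 + |xs len aR - xs len bL| + (xs len bR - xs len bL)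
      + |xs len bR - xs len 0| := by
    rw [hss, hC]
    simp only [hc_append, A3, F3, M3, B3, G3, R3, hc, Fin.val_zero]
    ring
  have hcntl : (vs ss).length = K1.card + K1.card % 2 + (K2.card + K2.card % 2) := by
    rw [hvs, F2, G2]
    simp only [List.length_append, alt_len, ← len1, ← len2]
    by_cases e1 : Even l1.length <;> by_cases e2 : Even l2.length <;>
      simp only [e1, e2, if_true, if_false, List.length_cons, List.length_nil] <;>
      rw [Nat.even_iff] at e1 e2 <;> omega
  have hF : ∀ x ∈ vs F, x.1 ∈ K1 ∧ x.2.1 = 0 := by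
    intro x hx
    rw [F2] at hx
    split_ifs at hx
    · simp at hx; subst hx; exact ⟨haK, rfl⟩
    · simp at hx
  have hG : ∀ x ∈ vs G, x.1 ∈ K2 ∧ x.2.1 = 1 := by
    intro x hx
    rw [G2] at hx
    split_ifs at hx
    · simp at hx
    · simp at hx; subst hx; exact ⟨hbK, rfl⟩
  have hvert' := vert_ex hsymm hvert hv
  have hor' := hor_ex hsymm hpos hcross hv
  have hd : 0 ≤ d := by
    rw [← hvert 0 0]
    apply pathLen_nonneg
    have := dirPath_chain (m := m) 0 0 true
    exact List.IsChain.imp (fun x y h => (hpos x y h).le) this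
  obtain ⟨f1, f2⟩ := alt_first (ss := ss) (j := 0) l1 true [] _ (by rw [hvs]; simp; rfl) nd1 (by simp)
  obtain ⟨g1, g2⟩ := alt_first (ss := ss) (j := 1) l2 true (alt 0 true l1 ++ vs F) _
    (by rw [hvs]; simp; rfl) nd2 (by
      intro a _ dir hm
      rcases List.mem_append.1 hm with hm | hm
      · exact absurd (mem_alt hm).2 (by simp)
      · exact absurd (hF _ hm).2 (by simp))
  have hfirst1 : ∀ a ∈ K1, ∃ P dir, FirstAt ss P a 0 dir := by
    intro a ha
    by_cases h0 : a = 0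
    · subst h0
      obtain ⟨P, dir, h⟩ := exists_first (l := vs ss) (a := 0) (j := 0) (dir := false)
        (by rw [hvs]; simp)
      exact ⟨P, dir, h⟩
    · obtain ⟨P, dir, h, -⟩ := f1 a ((ml1 a).2 ⟨h0, ha⟩)
      exact ⟨P, dir, h⟩
  have hfirst2 : ∀ a ∈ K2, ∃ P dir, FirstAt ss P a 1 dir := by
    intro a ha
    obtain ⟨P, dir, h, -⟩ := g1 a ((ml2 a).2 ha)
    exact ⟨P, dir, h⟩
  refine ⟨Sum.inl (0, 0) :: ex m ss, ⟨rfl, getLast_ex hv, ex_chain hv⟩, noRev hv, ⟨?_, ?_⟩,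
    ⟨?_, ?_, ?_, ?_, ?_, ?_⟩, ?_, ?_⟩
  · intro a ha
    obtain ⟨P, dir, h⟩ := hfirst1 a ha
    exact ⟨_, dir, h.trav hv⟩
  · intro a ha
    obtain ⟨P, dir, h⟩ := hfirst2 a ha
    exact ⟨_, dir, h.trav hv⟩
  · intro q i j dir h
    obtain ⟨A', B', e, -⟩ := trav_split hv h
    have hm : (i, j, dir) ∈ vs ss := mem_vs.2 (by rw [e]; simp)
    rw [hvs] at hm
    simp only [List.mem_append] at hm
    rcases hm with hm | hm | hm | hm | hm
    · obtain ⟨k1, k2⟩ := mem_alt hm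
      exact Or.inl ⟨k2, ((ml1 _).1 k1).2⟩
    · exact Or.inl ⟨(hF _ hm).2, (hF _ hm).1⟩
    · obtain ⟨k1, k2⟩ := mem_alt hm
      exact Or.inr ⟨k2, (ml2 _).1 k1⟩
    · exact Or.inr ⟨(hG _ hm).2, (hG _ hm).1⟩
    · simp at hm
      exact Or.inl ⟨hm.2.1, hm.1 ▸ h1⟩
  · rw [hmin, ← hl1]
    refine List.IsChain.imp ?_ f2
    rintro a a' ⟨P1, P2, dd, k1, k2, k3⟩
    exact k1.lt hv k2 k3
  · rw [hmin]
    intro a ha b hb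
    obtain ⟨P, dir, k1, k2, k3⟩ := f1 a ((ml1 a).2 (by simpa using ha))
    obtain ⟨P', dir', k1', k2', k3'⟩ := g1 b ((ml2 b).2 hb)
    refine k1.lt hv k1' ?_
    rw [List.length_append, alt_len] at k2'
    simp at k3
    omega
  · rw [← hl2]
    refine List.IsChain.imp ?_ g2
    rintro a a' ⟨P1, P2, dd, k1, k2, k3⟩
    exact k1.lt hv k2 k3
  · refine ⟨fdir ss, ?_, ?_, ?_, ?_⟩
    · intro a ha
      obtain ⟨P, dir, h⟩ := hfirst1 a ha
      rw [h.fdir]; exact h.trav hv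
    · intro a ha
      obtain ⟨P, dir, h⟩ := hfirst2 a ha
      rw [h.fdir]; exact h.trav hv
    · rw [hmin, ← hl1]
      refine List.IsChain.imp ?_ f2
      rintro a a' ⟨P1, P2, dd, k1, k2, k3⟩
      rw [k1.fdir, k2.fdir]; simp
    · rw [← hl2]
      refine List.IsChain.imp ?_ g2
      rintro a a' ⟨P1, P2, dd, k1, k2, k3⟩
      rw [k1.fdir, k2.fdir]; simp
  · refine ⟨(ex m C).length, false, ?_, ?_⟩
    · rw [hmin]; exact trav_of_split hv hss
    · intro q' i' j' dir' h
      obtain ⟨A', B', e, rfl⟩ := trav_split hv h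
      rw [hss] at e
      rcases split_cases e with ⟨D, hD⟩ | ⟨D, hD⟩ | ⟨hD, -⟩
      · rw [hD, ex_append]; simp
      · rw [hD] at e; simp at e
      · rw [hD]
  · intro r' t1 t2 t3 t4
    obtain ⟨ss', hv', hr'⟩ := decomp r'.length r' (0, 0) (0, 0) le_rfl t1.1 t1.2.1 t1.2.2 t2
    have hn0 : ∀ a ∈ K1, ∃ dir, (a, (0 : Fin 2), dir) ∈ vs ss' := by
      intro a ha
      obtain ⟨q, dir, h⟩ := t3.1 a ha
      rw [hr'] at h
      obtain ⟨A', B', e, -⟩ := trav_split hv' h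
      exact ⟨dir, mem_vs.2 (by rw [e]; simp)⟩
    have hn1 : ∀ a ∈ K2, ∃ dir, (a, (1 : Fin 2), dir) ∈ vs ss' := by
      intro a ha
      obtain ⟨q, dir, h⟩ := t3.2 a ha
      rw [hr'] at h
      obtain ⟨A', B', e, -⟩ := trav_split hv' h
      exact ⟨dir, mem_vs.2 (by rw [e]; simp)⟩
    have c0 := evenlb (cnt_ge hn0) ((cnt0_even hv').2 (by simp))
    have c1 := evenlb (cnt_ge hn1) ((cnt1_even hv').2 (by simp))
    have hcnt : (vs ss).length ≤ (vs ss').length := by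
      rw [hcntl, cnt_add ss']; omega
    have hV : vertLen len (Sum.inl (0, 0) :: ex m ss) ≤ vertLen len r' := by
      rw [hvert', hr', vert_ex hsymm hvert hv']
      exact mul_le_mul_of_nonneg_right (by exact_mod_cast hcnt) hd
    obtain ⟨-, s2, s3, s4, ⟨fd, s5, s6, -, -⟩, -⟩ := t4
    rw [hmin] at s3
    rw [← hl2, hl2c] at s4
    have hLast := chain_first_last (f := fun b => firstPos r' b 1) bL l2t s4
    rw [← hbR2] at hLast
    obtain ⟨u1, u2⟩ := trav_col (s6 bL ((ml2 _).1 hbL')) (art 0 0)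
    obtain ⟨u3, u4⟩ := trav_col (s6 bR hbK) (art 0 0)
    have hH : |xs len 0 - xs len aR| + |xs len aR - xs len bL| + |xs len bL - xs len bR|
        + |xs len bR - xs len 0| ≤ pathLen (fH len) r' := by
      rcases haR' with ⟨z, -⟩ | z
      · refine hor_lb hsymm hpos hcross t1 aR bL bR 0 _ _ (Nat.zero_le _) hLast u3 ?_ u2 u4
        rw [hr', z]; rfl
      · have z' := (ml1 _).1 z
        exact hor_lb hsymm hpos hcross t1 aR bL bR _ _ _
          (s3 aR (by simpa using z') bL ((ml2 _).1 hbL')).le hLast u3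
          (trav_col (s5 aR haK) (art 0 0)).2 u2 u4
    have m1 : xs len 0 ≤ xs len aR := xs_mono hpos (Nat.zero_le _)
    have m2 : xs len bL ≤ xs len bR := xs_mono hpos hLR
    rw [abs_sub_comm (xs len 0), abs_of_nonneg (sub_nonneg.2 m1),
      abs_sub_comm (xs len bL) (xs len bR), abs_of_nonneg (sub_nonneg.2 m2)] at hH
    rw [pathLen_VH len r', pathLen_VH len (Sum.inl (0, 0) :: ex m ss), hor', hhc]
    linarith
  · rw [hvert', hcntl]
    refine ⟨?_, ?_, ?_⟩
    · rintro ⟨o1, o2⟩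
      rw [Nat.odd_iff.1 o1, Nat.odd_iff.1 o2]; push_cast; ring
    · rintro ⟨o1, o2⟩
      rw [Nat.even_iff.1 o1, Nat.even_iff.1 o2]; push_cast; ring
    · rintro (⟨o1, o2⟩ | ⟨o1, o2⟩)
      · rw [Nat.odd_iff.1 o1, Nat.even_iff.1 o2]; push_cast; ring
      · rw [Nat.even_iff.1 o1, Nat.odd_iff.1 o2]; push_cast; ring


end TwoBlock
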